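/- Beta function lower bound (eq. (59)): For every integer N_t ≥ 2 and every real B̄ ≥ 0, setting B = B̄·N_t and n = 2^B, n·Beta(n, 1 + 1/(N_t−1)) ≥ 2^{−B̄}·(1 − (2^{B̄} − 1 + γ + 2^{−B})/(N_t − 1)), where γ is the Euler–Mascheroni constant. -/

import Mathlib

/-- The Euler Beta function `Beta(x,y) = ∫₀¹ t^{x-1} (1-t)^{y-1} dt`. -/
noncomputable def Beta (x y : ℝ) : ℝ := ∫ t in (0:ℝ)..1, t ^ (x - 1) * (1 - t) ^ (y - 1)

lemma Beta_eq_Gamma (x y : ℝ) (hx : 0 < x) (hy : 0 < y) :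
    Beta x y = Real.Gamma x * Real.Gamma y / Real.Gamma (x + y) := by
  have h := ProbabilityTheory.beta_eq_betaIntegralReal x y hx hy
  have h2 : Complex.betaIntegral x y = ((Beta x y : ℝ) : ℂ) := by
    rw [Complex.betaIntegral, Beta, ← intervalIntegral.integral_ofReal]
    apply intervalIntegral.integral_congr
    intro t ht
    rw [Set.uIcc_of_le zero_le_one] at ht
    have h1 : 0 ≤ 1 - t := by linarith [ht.2]
    simp only
    rw [Complex.ofReal_mul, Complex.ofReal_cpow ht.1, Complex.ofReal_cpow h1]
    push_cast
    rfl
  rw [h2, Complex.ofReal_re] at h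
  rw [← h, ProbabilityTheory.beta]

lemma Gamma_add_le (y e : ℝ) (hy : 0 < y) (he : 0 < e) (he1 : e ≤ 1) :
    Real.Gamma (y + e) ≤ Real.Gamma y * Real.exp (e * Real.log y) := by
  have hg := Real.Gamma_pos_of_pos hy
  have hy1 : y + 1 ∈ Set.Ioi (0:ℝ) := by simp; linarith
  have h := Real.convexOn_log_Gamma.2 (Set.mem_Ioi.2 hy) hy1
    (show 0 ≤ 1 - e by linarith) he.le (by ring)
  simp only [Function.comp, smul_eq_mul] at h
  rw [show (1 - e) * y + e * (y + 1) = y + e by ring, Real.Gamma_add_one hy.ne',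
    Real.log_mul hy.ne' hg.ne'] at h
  have h3 : Real.log (Real.Gamma (y + e)) ≤ Real.log (Real.Gamma y) + e * Real.log y := by
    linarith
  calc Real.Gamma (y + e) = Real.exp (Real.log (Real.Gamma (y + e))) :=
        (Real.exp_log (Real.Gamma_pos_of_pos (by linarith))).symm
    _ ≤ _ := Real.exp_le_exp.2 h3
    _ = _ := by rw [Real.exp_add, Real.exp_log hg]

lemma Gamma_one_add_ge (e : ℝ) (he : 0 < e) :
    1 - Real.eulerMascheroniConstant * e ≤ Real.Gamma (1 + e) := by
  have h := Real.convexOn_Gamma.le_slope_of_hasDerivAt (x := 1) (y := 1 + e)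
    (by simp) (by simp; linarith) (by linarith) Real.hasDerivAt_Gamma_one
  rw [slope_def_field, Real.Gamma_one, le_div_iff₀ (by linarith)] at h
  linarith

/-- Beta function lower bound (eq. (59)): for every integer `N_t ≥ 2` and every real `B̄ ≥ 0`,
setting `B = B̄·N_t` and `n = 2^B`,
`n·Beta(n, 1 + 1/(N_t−1)) ≥ 2^{−B̄}·(1 − (2^{B̄} − 1 + γ + 2^{−B})/(N_t − 1))`. -/
theorem beta_lower_bound (Nt : ℕ) (hNt : 2 ≤ Nt) (Bbar : ℝ) (hB : 0 ≤ Bbar) :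
    (2:ℝ) ^ (Bbar * (Nt : ℝ)) * Beta ((2:ℝ) ^ (Bbar * (Nt : ℝ))) (1 + 1 / ((Nt : ℝ) - 1)) ≥
      (2:ℝ) ^ (-Bbar) *
        (1 - ((2:ℝ) ^ Bbar - 1 + Real.eulerMascheroniConstant
              + (2:ℝ) ^ (-(Bbar * (Nt : ℝ)))) / ((Nt : ℝ) - 1)) := by
  have hN : (2:ℝ) ≤ Nt := by exact_mod_cast hNt
  obtain ⟨e, he⟩ : ∃ e, e = 1 / ((Nt : ℝ) - 1) := ⟨_, rfl⟩
  have he0 : 0 < e := by rw [he]; apply one_div_pos.2; linarith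
  have he1 : e ≤ 1 := by rw [he, div_le_one (by linarith)]; linarith
  have heN : e * Nt = 1 + e := by
    have : (Nt : ℝ) - 1 ≠ 0 := by linarith
    rw [he]; field_simp; ring
  have hlogn : Real.log ((2:ℝ) ^ (Bbar * (Nt : ℝ))) = Bbar * Nt * Real.log 2 :=
    Real.log_rpow two_pos _
  have hloga : Real.log ((2:ℝ) ^ Bbar) = Bbar * Real.log 2 := Real.log_rpow two_pos _
  have hn0 : 0 < (2:ℝ) ^ (Bbar * (Nt : ℝ)) := by positivity
  have ha1 : 1 ≤ (2:ℝ) ^ Bbar := Real.one_le_rpow (by norm_num) hB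
  rw [Real.rpow_neg two_pos.le, Real.rpow_neg two_pos.le, ← he,
    div_eq_mul_one_div _ ((Nt : ℝ) - 1), ← he]
  generalize (2:ℝ) ^ (Bbar * (Nt : ℝ)) = n at *
  generalize (2:ℝ) ^ Bbar = a at *
  have ha0 : 0 < a := by linarith
  set γ := Real.eulerMascheroniConstant
  have hγ0 : 0 < γ := by have := Real.one_half_lt_eulerMascheroniConstant; linarith
  have hγ1 : γ < 2 / 3 := Real.eulerMascheroniConstant_lt_two_thirds
  have hG1 := Gamma_one_add_ge e he0
  have hG2 := Gamma_add_le (n + 1) e (by linarith) he0 he1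
  have hgn := Real.Gamma_pos_of_pos (show 0 < n + 1 by linarith)
  have hgne := Real.Gamma_pos_of_pos (show 0 < n + 1 + e by linarith)
  have hpos : 0 ≤ 1 - γ * e := by nlinarith
  have hlog : Real.log (n + 1) ≤ Bbar * Nt * Real.log 2 + n⁻¹ := by
    have : n + 1 = n * (1 + n⁻¹) := by field_simp
    rw [this, Real.log_mul hn0.ne' (by positivity), hlogn]
    have := Real.log_le_sub_one_of_pos (show 0 < 1 + n⁻¹ by positivity)
    linarith
  have hla := Real.log_le_sub_one_of_pos ha0
  have hexp : a⁻¹ * (1 - e * (a - 1 + n⁻¹)) ≤ Real.exp (-(e * Real.log (n + 1))) := by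
    have h1 : e * Real.log (n + 1) ≤ Real.log a + e * (a - 1 + n⁻¹) := by
      calc e * Real.log (n + 1) ≤ e * (Bbar * Nt * Real.log 2 + n⁻¹) := by gcongr
        _ = (e * Nt) * (Bbar * Real.log 2) + e * n⁻¹ := by ring
        _ = Real.log a + e * (Real.log a + n⁻¹) := by rw [heN, ← hloga]; ring
        _ ≤ _ := by gcongr
    calc a⁻¹ * (1 - e * (a - 1 + n⁻¹)) ≤ a⁻¹ * Real.exp (-(e * (a - 1 + n⁻¹))) := by
          gcongr
          linarith [Real.add_one_le_exp (-(e * (a - 1 + n⁻¹)))]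
      _ = Real.exp (-(Real.log a + e * (a - 1 + n⁻¹))) := by
          rw [neg_add, Real.exp_add, Real.exp_neg (Real.log a), Real.exp_log ha0]
      _ ≤ _ := Real.exp_le_exp.2 (by linarith)
  have hu : 0 ≤ a - 1 + n⁻¹ := by have := inv_pos.2 hn0; linarith
  have hL : n * Beta n (1 + e) =
      Real.Gamma (n + 1) * Real.Gamma (1 + e) / Real.Gamma (n + 1 + e) := by
    rw [Beta_eq_Gamma _ _ hn0 (by linarith), Real.Gamma_add_one hn0.ne', ← add_assoc]; ring
  rw [hL, ge_iff_le]
  calc a⁻¹ * (1 - (a - 1 + γ + n⁻¹) * e)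
      ≤ a⁻¹ * ((1 - e * (a - 1 + n⁻¹)) * (1 - γ * e)) := by
        gcongr
        have : 0 ≤ γ * e * e * (a - 1 + n⁻¹) := by positivity
        linarith
    _ = a⁻¹ * (1 - e * (a - 1 + n⁻¹)) * (1 - γ * e) := by ring
    _ ≤ Real.exp (-(e * Real.log (n + 1))) * (1 - γ * e) := by gcongr
    _ ≤ Real.exp (-(e * Real.log (n + 1))) * Real.Gamma (1 + e) := by gcongr
    _ ≤ _ := by
        rw [le_div_iff₀ hgne]
        calc _ ≤ Real.exp (-(e * Real.log (n + 1))) * Real.Gamma (1 + e) *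
              (Real.Gamma (n + 1) * Real.exp (e * Real.log (n + 1))) := by
              have := Real.Gamma_pos_of_pos (show 0 < 1 + e by linarith)
              gcongr
          _ = (Real.exp (-(e * Real.log (n + 1))) * Real.exp (e * Real.log (n + 1))) *
              (Real.Gamma (n + 1) * Real.Gamma (1 + e)) := by ring
          _ = _ := by rw [← Real.exp_add]; simp
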